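/- For every prime number q, the polynomial Σ_{i=0}^{q−1} (b−a)^{3^i − 1} ∈ 𝔽₃[a,b] is irreducible in 𝔽₃[a,b] if and only if q = 2. Equivalently, the one-variable polynomial g(x) = Σ_{i=0}^{q−1} x^{3^i − 1} ∈ 𝔽₃[x] is irreducible in 𝔽₃[x] if and only if q = 2. -/

import Mathlib

open MvPolynomial Finset

/-!
Write `g = ∑_{i<q} x^(3^i-1)` and `L = x * g = ∑_{i<q} x^(3^i)`. As cubing is additive in
characteristic 3, `L^3 - L` telescopes to `x^(3^q) - x`, so `g` divides `x^(3^q) - x`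
(`gPoly_dvd`). Every irreducible factor of `x^(3^q) - x` over `𝔽₃` has degree dividing `q`, whereas
`deg g ≥ 3^(q-1) - 1 > q` once `q ≥ 3`; hence `g` is reducible for `q ≥ 3`. For `q = 2`,
`g = 1 + x^2` is a quadratic without roots in `𝔽₃`.

For the two-variable polynomial, the linear change of variables `(a, b) ↦ (X, x + X)` is an
isomorphism `𝔽₃[a,b] ≃ 𝔽₃[x][X]` carrying `b - a` to the constant `x`, thus `g(b - a)` to the
constant polynomial `g`. In these unique factorization domains irreducible means prime, and a
constant is prime in `R[X]` exactly when it is prime in `R` (`irreducible_iff_gPoly`).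
-/

/-- The variable `a` in `𝔽₃[a,b]`. -/
noncomputable def aP : MvPolynomial (Fin 2) (ZMod 3) := X 0

/-- The variable `b` in `𝔽₃[a,b]`. -/
noncomputable def bP : MvPolynomial (Fin 2) (ZMod 3) := X 1

/-- The one-variable polynomial `g(x) = ∑_{i<q} x^(3^i-1)` over `𝔽₃`. -/
noncomputable def gPoly (q : ℕ) : Polynomial (ZMod 3) :=
  ∑ i ∈ Finset.range q, (Polynomial.X : Polynomial (ZMod 3)) ^ (3 ^ i - 1)

lemma X_mul_gPoly (q : ℕ) :
    Polynomial.X * gPoly q = ∑ i ∈ Finset.range q, (Polynomial.X : Polynomial (ZMod 3)) ^ 3 ^ i := by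
  rw [gPoly, Finset.mul_sum]
  refine Finset.sum_congr rfl fun i _ => ?_
  rw [← pow_succ', Nat.sub_add_cancel (Nat.one_le_pow _ _ (by norm_num))]

lemma gPoly_dvd (q : ℕ) :
    gPoly q ∣ (Polynomial.X : Polynomial (ZMod 3)) ^ 3 ^ q - Polynomial.X := by
  have h : (Polynomial.X * gPoly q) ^ 3 - Polynomial.X * gPoly q
      = (Polynomial.X : Polynomial (ZMod 3)) ^ 3 ^ q - Polynomial.X := by
    rw [X_mul_gPoly, sum_pow_char 3, ← Finset.sum_sub_distrib]
    simp_rw [← pow_mul, ← pow_succ]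
    rw [Finset.sum_range_sub (fun i => (Polynomial.X : Polynomial (ZMod 3)) ^ 3 ^ i)]
    simp
  rw [← h]
  exact dvd_sub ((Dvd.intro_left _ rfl).trans (dvd_pow_self _ (by norm_num)))
    (Dvd.intro_left _ rfl)

lemma le_natDegree_gPoly (k : ℕ) : 3 ^ k - 1 ≤ (gPoly (k + 1)).natDegree := by
  apply Polynomial.le_natDegree_of_ne_zero
  rw [gPoly, Polynomial.finsetSum_coeff, Finset.sum_eq_single k]
  · simp
  · intro i _ hik
    rw [Polynomial.coeff_X_pow, if_neg]
    intro h
    have h1 : 1 ≤ 3 ^ i := Nat.one_le_pow _ _ (by norm_num)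
    have h2 : 1 ≤ 3 ^ k := Nat.one_le_pow _ _ (by norm_num)
    exact hik (Nat.pow_right_injective (a := 3) (by norm_num) (by simp only; omega))
  · simp

lemma irreducible_gPoly_two : Irreducible (gPoly 2) := by
  have hg : gPoly 2 = Polynomial.X ^ 2 + Polynomial.C 1 := by
    simp [gPoly, Finset.sum_range_succ, add_comm]
  have hd : (gPoly 2).natDegree = 2 := by rw [hg]; exact Polynomial.natDegree_X_pow_add_C
  refine Polynomial.irreducible_of_degree_le_three_of_not_isRoot (by rw [hd]; simp) fun x => ?_
  rw [hg, Polynomial.IsRoot.def]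
  simp only [Polynomial.eval_add, Polynomial.eval_pow, Polynomial.eval_X, Polynomial.eval_C]
  revert x
  decide

lemma irreducible_gPoly_iff (q : ℕ) (hq : q.Prime) : Irreducible (gPoly q) ↔ q = 2 := by
  refine ⟨fun hi => ?_, fun h => h ▸ irreducible_gPoly_two⟩
  by_contra hne
  obtain ⟨k, rfl⟩ : ∃ k, q = k + 3 := ⟨q - 3, by have := hq.two_le; omega⟩
  have hdvd : (gPoly (k + 3)).natDegree ∣ k + 3 :=
    hi.natDegree_dvd_of_dvd_X_pow_card_pow_sub_X (by simpa using gPoly_dvd (k + 3))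
  have h1 := Nat.le_of_dvd (by omega) hdvd
  have h2 := le_natDegree_gPoly (k + 2)
  have h3 : k < 3 ^ k := Nat.lt_pow_self (by norm_num)
  rw [show k + 2 + 1 = k + 3 from rfl, pow_add] at h2
  omega

/-- The change of variables `𝔽₃[a,b] ≃ 𝔽₃[x][X]`, `a ↦ X`, `b ↦ x + X`, with inverse
`x ↦ b - a`, `X ↦ a`. -/
noncomputable def shearEquiv :
    MvPolynomial (Fin 2) (ZMod 3) ≃+* Polynomial (Polynomial (ZMod 3)) :=
  RingEquiv.ofRingHom
    (aeval ![Polynomial.X, Polynomial.C Polynomial.X + Polynomial.X] :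
      MvPolynomial (Fin 2) (ZMod 3) →ₐ[ZMod 3] Polynomial (Polynomial (ZMod 3))).toRingHom
    (Polynomial.eval₂RingHom
      (Polynomial.aeval (bP - aP) : Polynomial (ZMod 3) →ₐ[ZMod 3] _).toRingHom aP)
    (by
      apply Polynomial.ringHom_ext'
      · ext1
        · exact Subsingleton.elim _ _
        · simp [aP, bP]
      · simp [aP])
    (by
      ext x
      · simp
      · fin_cases x <;> simp [aP, bP])

lemma shearEquiv_sub : shearEquiv (bP - aP) = Polynomial.C Polynomial.X := by
  simp [shearEquiv, aP, bP]

lemma irreducible_iff_gPoly (q : ℕ) :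
    Irreducible (∑ i ∈ Finset.range q, (bP - aP) ^ (3 ^ i - 1)) ↔ Irreducible (gPoly q) := by
  have h : shearEquiv (∑ i ∈ Finset.range q, (bP - aP) ^ (3 ^ i - 1)) = Polynomial.C (gPoly q) := by
    simp only [map_sum, map_pow, shearEquiv_sub, gPoly]
  rw [← MulEquiv.irreducible_iff shearEquiv, h, irreducible_iff_prime, irreducible_iff_prime,
    Polynomial.prime_C_iff]

theorem stmt19 (q : ℕ) (hq : Nat.Prime q) :
    (Irreducible (∑ i ∈ Finset.range q, (bP - aP) ^ (3 ^ i - 1)) ↔ q = 2) ∧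
    (Irreducible (∑ i ∈ Finset.range q, (Polynomial.X : Polynomial (ZMod 3)) ^ (3 ^ i - 1))
      ↔ q = 2) :=
  ⟨(irreducible_iff_gPoly q).trans (irreducible_gPoly_iff q hq), irreducible_gPoly_iff q hq⟩
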